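/- Let ε_1, ε_2 ∈ {−1, 1} and r_1, r_2 > 0. Then for every u ∈ C_c^∞(ℝ²) one has ∫_{ℝ²} ( −( ε_1 ∂_1∂_1 u + ε_2 ∂_2∂_2 u )² − (∂_1 u)²/r_1² − (∂_2 u)²/r_2² + 2 ε_1 ε_2 (∂_1 u)(∂_2 u)/(r_1 r_2) ) ≤ 0. -/

import Mathlib

open MeasureTheory Real

/-- Partial derivative of `u : ℝ² → ℝ` in the first coordinate. -/
noncomputable def pdS (u : ℝ × ℝ → ℝ) (x : ℝ × ℝ) : ℝ := fderiv ℝ u x (1, 0)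

/-- Partial derivative of `u : ℝ² → ℝ` in the second coordinate. -/
noncomputable def pdT (u : ℝ × ℝ → ℝ) (x : ℝ × ℝ) : ℝ := fderiv ℝ u x (0, 1)

/-!
The first-order part of the second variation density is minus the square of a single directional
derivative of the potential, because the signs `ε₁`, `ε₂` square to `1`. The whole density is thus
minus a sum of two squares. In terms of the curvatures `κᵢ = 1 / rᵢ` this remains meaningful for
`κᵢ = 0`, where the hyperbola degenerates to a line.
-/

/-- The second-order operator `ε₁ ∂₁∂₁ + ε₂ ∂₂∂₂`: for signs `εᵢ` it is the Laplacian of the flat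
metric `ε₁ dx₁² + ε₂ dx₂²`. -/
noncomputable def signedLaplacian (ε₁ ε₂ : ℝ) (u : ℝ × ℝ → ℝ) (x : ℝ × ℝ) : ℝ :=
  ε₁ * pdS (pdS u) x + ε₂ * pdT (pdT u) x

/-- The derivative along `(ε₁ κ₁, -ε₂ κ₂)`, whose square is the first-order part of the second
variation up to sign. -/
noncomputable def curvatureDerivative (ε₁ ε₂ κ₁ κ₂ : ℝ) (u : ℝ × ℝ → ℝ) (x : ℝ × ℝ) : ℝ :=
  ε₁ * (κ₁ * pdS u x) - ε₂ * (κ₂ * pdT u x)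

/-- The second variation density of area under the Hamiltonian variation with potential `u`, written
with the curvatures `κᵢ` in place of the inverse radii `1 / rᵢ`, so that no division occurs. -/
noncomputable def secondVariationDensity (ε₁ ε₂ κ₁ κ₂ : ℝ) (u : ℝ × ℝ → ℝ) (x : ℝ × ℝ) : ℝ :=
  -signedLaplacian ε₁ ε₂ u x ^ 2 - (κ₁ * pdS u x) ^ 2 - (κ₂ * pdT u x) ^ 2
    + 2 * ε₁ * ε₂ * (κ₁ * pdS u x) * (κ₂ * pdT u x)

theorem mul_sub_mul_sq_of_sq_eq_one {R : Type*} [CommRing R] {ε₁ ε₂ : R} (hε₁ : ε₁ ^ 2 = 1)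
    (hε₂ : ε₂ ^ 2 = 1) (p q : R) :
    (ε₁ * p - ε₂ * q) ^ 2 = p ^ 2 + q ^ 2 - 2 * ε₁ * ε₂ * p * q := by
  linear_combination p ^ 2 * hε₁ + q ^ 2 * hε₂

theorem secondVariationDensity_inv (ε₁ ε₂ r₁ r₂ : ℝ) (u : ℝ × ℝ → ℝ) (x : ℝ × ℝ) :
    secondVariationDensity ε₁ ε₂ r₁⁻¹ r₂⁻¹ u x =
      -(ε₁ * pdS (pdS u) x + ε₂ * pdT (pdT u) x) ^ 2
        - (pdS u x) ^ 2 / r₁ ^ 2 - (pdT u x) ^ 2 / r₂ ^ 2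
        + 2 * ε₁ * ε₂ * (pdS u x) * (pdT u x) / (r₁ * r₂) := by
  simp only [secondVariationDensity, signedLaplacian]
  ring

section PartialDerivatives

variable {u : ℝ × ℝ → ℝ} {m n : WithTop ℕ∞}

theorem contDiff_pdS (hu : ContDiff ℝ n u) (hmn : m + 1 ≤ n) : ContDiff ℝ m (pdS u) :=
  (hu.fderiv_right hmn).clm_apply contDiff_const

theorem contDiff_pdT (hu : ContDiff ℝ n u) (hmn : m + 1 ≤ n) : ContDiff ℝ m (pdT u) :=
  (hu.fderiv_right hmn).clm_apply contDiff_const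

theorem hasCompactSupport_pdS (hc : HasCompactSupport u) : HasCompactSupport (pdS u) :=
  hc.fderiv_apply ℝ (1, 0)

theorem hasCompactSupport_pdT (hc : HasCompactSupport u) : HasCompactSupport (pdT u) :=
  hc.fderiv_apply ℝ (0, 1)

end PartialDerivatives

section SecondVariation

variable {ε₁ ε₂ κ₁ κ₂ : ℝ} {u : ℝ × ℝ → ℝ} {μ : Measure (ℝ × ℝ)}

theorem secondVariationDensity_eq_neg_add_sq (hε₁ : ε₁ ^ 2 = 1) (hε₂ : ε₂ ^ 2 = 1)
    (x : ℝ × ℝ) :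
    secondVariationDensity ε₁ ε₂ κ₁ κ₂ u x =
      -(signedLaplacian ε₁ ε₂ u x ^ 2 + curvatureDerivative ε₁ ε₂ κ₁ κ₂ u x ^ 2) := by
  rw [curvatureDerivative, mul_sub_mul_sq_of_sq_eq_one hε₁ hε₂, secondVariationDensity]
  ring

theorem continuous_signedLaplacian (hu : ContDiff ℝ 2 u) :
    Continuous (signedLaplacian ε₁ ε₂ u) := by
  have hSS : ContDiff ℝ 0 (pdS (pdS u)) :=
    contDiff_pdS (contDiff_pdS (m := 1) hu one_add_one_eq_two.le) (zero_add 1).le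
  have hTT : ContDiff ℝ 0 (pdT (pdT u)) :=
    contDiff_pdT (contDiff_pdT (m := 1) hu one_add_one_eq_two.le) (zero_add 1).le
  exact (hSS.continuous.const_mul ε₁).add (hTT.continuous.const_mul ε₂)

theorem continuous_secondVariationDensity (hu : ContDiff ℝ 2 u) :
    Continuous (secondVariationDensity ε₁ ε₂ κ₁ κ₂ u) := by
  have hL : Continuous (signedLaplacian ε₁ ε₂ u) := continuous_signedLaplacian hu
  have hS : Continuous (pdS u) := (contDiff_pdS (m := 1) hu one_add_one_eq_two.le).continuous
  have hT : Continuous (pdT u) := (contDiff_pdT (m := 1) hu one_add_one_eq_two.le).continuous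
  unfold secondVariationDensity
  fun_prop

theorem hasCompactSupport_secondVariationDensity (hc : HasCompactSupport u) :
    HasCompactSupport (secondVariationDensity ε₁ ε₂ κ₁ κ₂ u) := by
  have hS := hasCompactSupport_pdS hc
  have hT := hasCompactSupport_pdT hc
  have hSS := hasCompactSupport_pdS hS
  have hTT := hasCompactSupport_pdT hT
  rw [hasCompactSupport_iff_eventuallyEq] at hS hT hSS hTT ⊢
  filter_upwards [hS, hT, hSS, hTT] with x hxS hxT hxSS hxTT
  simp [secondVariationDensity, signedLaplacian, hxS, hxT, hxSS, hxTT]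

theorem integrable_secondVariationDensity [IsFiniteMeasureOnCompacts μ] (hu : ContDiff ℝ 2 u)
    (hc : HasCompactSupport u) :
    Integrable (secondVariationDensity ε₁ ε₂ κ₁ κ₂ u) μ :=
  (continuous_secondVariationDensity hu).integrable_of_hasCompactSupport
    (hasCompactSupport_secondVariationDensity hc)

theorem integral_secondVariationDensity (hε₁ : ε₁ ^ 2 = 1) (hε₂ : ε₂ ^ 2 = 1)
    (hu : ContDiff ℝ 2 u) (h_int : Integrable (secondVariationDensity ε₁ ε₂ κ₁ κ₂ u) μ) :
    ∫ x, secondVariationDensity ε₁ ε₂ κ₁ κ₂ u x ∂μ =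
      -(∫ x, signedLaplacian ε₁ ε₂ u x ^ 2 ∂μ
        + ∫ x, curvatureDerivative ε₁ ε₂ κ₁ κ₂ u x ^ 2 ∂μ) := by
  have hdensity (x : ℝ × ℝ) :=
    secondVariationDensity_eq_neg_add_sq (κ₁ := κ₁) (κ₂ := κ₂) (u := u) hε₁ hε₂ x
  have hmeas : AEStronglyMeasurable (fun x => signedLaplacian ε₁ ε₂ u x ^ 2) μ :=
    ((continuous_signedLaplacian hu).pow 2).aestronglyMeasurable
  have hsum : Integrable ((fun x => signedLaplacian ε₁ ε₂ u x ^ 2)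
      + fun x => curvatureDerivative ε₁ ε₂ κ₁ κ₂ u x ^ 2) μ := by
    refine h_int.neg.congr (.of_forall fun x => ?_)
    simp only [Pi.neg_apply, Pi.add_apply, hdensity, neg_neg]
  obtain ⟨hL, hD⟩ := (integrable_add_iff_of_nonneg hmeas
    (.of_forall fun x => sq_nonneg _) (.of_forall fun x => sq_nonneg _)).mp hsum
  simp only [hdensity]
  rw [integral_neg, integral_add hL hD]

theorem product_of_two_hyperbolas_H_stable_general (hε₁ : ε₁ ^ 2 = 1) (hε₂ : ε₂ ^ 2 = 1)
    (hu : ContDiff ℝ 2 u) (h_int : Integrable (secondVariationDensity ε₁ ε₂ κ₁ κ₂ u) μ) :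
    ∫ x, secondVariationDensity ε₁ ε₂ κ₁ κ₂ u x ∂μ ≤ 0 := by
  rw [integral_secondVariationDensity hε₁ hε₂ hu h_int, neg_nonpos]
  exact add_nonneg (integral_nonneg fun x => sq_nonneg _) (integral_nonneg fun x => sq_nonneg _)

end SecondVariation

/-- Hamiltonian stability of the product of two hyperbolas `H²_{r₁,r₂} ⊂ D²`:
for every `u ∈ C_c^∞(ℝ²)` the second variation
`∫ (−(ε₁ ∂₁∂₁u + ε₂ ∂₂∂₂u)² − (∂₁u)²/r₁² − (∂₂u)²/r₂² + 2ε₁ε₂ ∂₁u ∂₂u/(r₁r₂))`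
is nonpositive. -/
theorem product_of_two_hyperbolas_H_stable
    (ε₁ ε₂ : ℝ) (hε₁ : ε₁ = -1 ∨ ε₁ = 1) (hε₂ : ε₂ = -1 ∨ ε₂ = 1)
    (r₁ r₂ : ℝ) (hr₁ : 0 < r₁) (hr₂ : 0 < r₂)
    (u : ℝ × ℝ → ℝ) (hu : ContDiff ℝ (⊤ : ℕ∞) u) (hc : HasCompactSupport u) :
    (∫ x, (-(ε₁ * pdS (pdS u) x + ε₂ * pdT (pdT u) x) ^ 2
        - (pdS u x) ^ 2 / r₁ ^ 2 - (pdT u x) ^ 2 / r₂ ^ 2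
        + 2 * ε₁ * ε₂ * (pdS u x) * (pdT u x) / (r₁ * r₂))) ≤ 0 := by
  have hu₂ : ContDiff ℝ 2 u := contDiff_infty.mp hu 2
  simpa only [secondVariationDensity_inv] using
    product_of_two_hyperbolas_H_stable_general (κ₁ := r₁⁻¹) (κ₂ := r₂⁻¹)
      (sq_eq_one_iff.mpr hε₁.symm) (sq_eq_one_iff.mpr hε₂.symm) hu₂
      (integrable_secondVariationDensity hu₂ hc)
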